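/- Let K be any field and L ⊆ ℤ^m a nonzero positive lattice. Suppose the lattice ideal I_L has a generating set {B_1,…,B_t} consisting of binomials each of which is a difference of two squarefree monomials, and suppose that I_L has a unique minimal system of binomial generators (that is, there is a binomial generating set of I_L of cardinality μ(I_L) each of whose elements B has the property that every binomial generating set of I_L contains B or −B). Then bar(I_L) = μ(I_L). -/

import Mathlib

open MvPolynomial

variable (K : Type*) [Field K]

/-- The monomial `x^w`. -/
noncomputable def mono {m : ℕ} (w : Fin m → ℕ) : MvPolynomial (Fin m) K :=
  ∏ i, X i ^ w i

/-- The positive part `u⁺` of an integer vector. -/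
def intPos {m : ℕ} (u : Fin m → ℤ) : Fin m → ℕ := fun i => (u i).toNat

/-- The negative part `u⁻` of an integer vector. -/
def intNeg {m : ℕ} (u : Fin m → ℤ) : Fin m → ℕ := fun i => (-u i).toNat

/-- Support of a vector of naturals. -/
def suppN {m : ℕ} (w : Fin m → ℕ) : Set (Fin m) := {i | w i ≠ 0}

/-- Support of a vector of integers. -/
def suppZ {m : ℕ} (u : Fin m → ℤ) : Set (Fin m) := {i | u i ≠ 0}

/-- The lattice ideal `I_L`. -/
noncomputable def latticeIdeal {m : ℕ} (L : AddSubgroup (Fin m → ℤ)) :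
    Ideal (MvPolynomial (Fin m) K) :=
  Ideal.span {f | ∃ u ∈ L, f = mono K (intPos u) - mono K (intNeg u)}

/-- A binomial: a difference of two monomials. -/
def IsBinomial {m : ℕ} (f : MvPolynomial (Fin m) K) : Prop :=
  ∃ u v : Fin m → ℕ, f = mono K u - mono K v

/-- `x^w` is an indispensable monomial of `I_L`: every binomial generating set of `I_L`
contains a binomial one of whose monomials is `x^w`. -/
def IsIndispMonomial {m : ℕ} (L : AddSubgroup (Fin m → ℤ)) (w : Fin m → ℕ) : Prop :=
  ∀ B : Set (MvPolynomial (Fin m) K), (∀ f ∈ B, IsBinomial K f) →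
    Ideal.span B = latticeIdeal K L →
    ∃ f ∈ B, ∃ v : Fin m → ℕ, f = mono K w - mono K v ∨ f = mono K v - mono K w

/-- The set `T` of supports of indispensable monomials of `I_L`. -/
def Tsupp {m : ℕ} (L : AddSubgroup (Fin m → ℤ)) : Set (Set (Fin m)) :=
  {E | ∃ w : Fin m → ℕ, IsIndispMonomial K L w ∧ E = suppN w}

/-- `T_min`, the set of minimal elements of `T` with respect to inclusion. -/
def Tmin {m : ℕ} (L : AddSubgroup (Fin m → ℤ)) : Set (Set (Fin m)) :=
  {E ∈ Tsupp K L | ∀ E' ∈ Tsupp K L, E' ⊆ E → E' = E}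

/-- The saturation `Sat(L)` of the lattice `L`. -/
def satL {m : ℕ} (L : AddSubgroup (Fin m → ℤ)) : Set (Fin m → ℤ) :=
  {u | ∃ d : ℤ, d ≠ 0 ∧ d • u ∈ L}

/-- A circuit of `Sat(L)`: a nonzero element of `Sat(L)` of minimal support
whose coordinates are relatively prime. -/
def IsCircuit {m : ℕ} (L : AddSubgroup (Fin m → ℤ)) (u : Fin m → ℤ) : Prop :=
  u ≠ 0 ∧ u ∈ satL L ∧
    (∀ v ∈ satL L, v ≠ 0 → suppZ v ⊆ suppZ u → suppZ v = suppZ u) ∧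
    Finset.univ.gcd (fun i => (u i).natAbs) = 1

/-- The set of cardinalities of binomial generating sets of `I_L`;
`μ(I_L)` is its infimum. -/
def muSet {m : ℕ} (L : AddSubgroup (Fin m → ℤ)) : Set ℕ :=
  {t | ∃ B : Finset (MvPolynomial (Fin m) K), B.card = t ∧
        (∀ f ∈ B, IsBinomial K f) ∧ Ideal.span (B : Set (MvPolynomial (Fin m) K)) = latticeIdeal K L}

/-- The set of numbers `s` such that some binomials `B_1,…,B_s ∈ I_L` generate
`rad(I_L)` up to radical; `bar(I_L)` is its infimum. -/
def barSet {m : ℕ} (L : AddSubgroup (Fin m → ℤ)) : Set ℕ :=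
  {s | ∃ B : Fin s → MvPolynomial (Fin m) K,
        (∀ j, IsBinomial K (B j) ∧ B j ∈ latticeIdeal K L) ∧
        (latticeIdeal K L).radical = (Ideal.span (Set.range B)).radical}


theorem mono_eq {m : ℕ} (w : Fin m → ℕ) :
    mono K w = monomial (Finsupp.equivFunOnFinite.symm w) (1 : K) := by
  rw [MvPolynomial.monomial_eq, Finsupp.prod_fintype _ _ (by simp)]
  simp [mono]

theorem mono_add' {m : ℕ} (w v : Fin m → ℕ) : mono K (w + v) = mono K w * mono K v := by
  simp [mono, pow_add, Finset.prod_mul_distrib]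

theorem coeff_mono {m : ℕ} (w v : Fin m → ℕ) :
    coeff (Finsupp.equivFunOnFinite.symm v) (mono K w) = if w = v then (1 : K) else 0 := by
  classical
  rw [mono_eq, coeff_monomial]
  simp

theorem mono_inj {m : ℕ} {a b : Fin m → ℕ} (h : mono K a = mono K b) : a = b := by
  have := congrArg (coeff (Finsupp.equivFunOnFinite.symm a)) h
  rw [coeff_mono, coeff_mono] at this
  by_contra hne
  rw [if_pos rfl, if_neg (fun h => hne h.symm)] at this
  exact one_ne_zero this

/-- if `x^c - x^v = ±(x^u - x^v)` and `u ≠ v` then `c = u`. -/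
theorem binom_cancel {m : ℕ} {u v c : Fin m → ℕ} (huv : u ≠ v)
    (h : mono K c - mono K v = mono K u - mono K v ∨
      mono K c - mono K v = mono K v - mono K u) : c = u := by
  rcases h with h | h
  · exact mono_inj K (sub_left_injective h)
  · have h1 := congrArg (coeff (Finsupp.equivFunOnFinite.symm u)) h
    simp only [coeff_sub, coeff_mono, if_neg huv.symm, if_pos] at h1
    by_contra hne
    rw [if_neg hne] at h1
    simp at h1

theorem mem_L_of_mem {m : ℕ} (L : AddSubgroup (Fin m → ℤ)) (u v : Fin m → ℕ)
    (h : mono K u - mono K v ∈ latticeIdeal K L) :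
    (fun i => (u i : ℤ) - (v i : ℤ)) ∈ L := by
  classical
  let φ : MvPolynomial (Fin m) K →ₐ[K] AddMonoidAlgebra K ((Fin m → ℤ) ⧸ L) :=
    aeval (fun i => AddMonoidAlgebra.single (QuotientAddGroup.mk (Pi.single i (1 : ℤ))) 1)
  have hφ : ∀ w : Fin m → ℕ, φ (mono K w) =
      AddMonoidAlgebra.single (QuotientAddGroup.mk (fun i => (w i : ℤ))) 1 := by
    intro w
    have key : ∀ s : Finset (Fin m), ∏ i ∈ s, (AddMonoidAlgebra.single
        (QuotientAddGroup.mk (Pi.single i (1 : ℤ)) : (Fin m → ℤ) ⧸ L) (1 : K)) ^ w i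
        = AddMonoidAlgebra.single
          (QuotientAddGroup.mk (∑ i ∈ s, Pi.single i (w i : ℤ)) : (Fin m → ℤ) ⧸ L) (1 : K) := by
      intro s
      induction s using Finset.induction_on with
      | empty => simp [AddMonoidAlgebra.one_def]
      | insert a s ha ih =>
        rw [Finset.prod_insert ha, ih, Finset.sum_insert ha, AddMonoidAlgebra.single_pow,
          AddMonoidAlgebra.single_mul_single, QuotientAddGroup.mk_add]
        congr 2
        · rw [← QuotientAddGroup.mk_nsmul, ← Pi.single_smul]
          simp
        · simp
    have e : φ (mono K w) = ∏ i, (AddMonoidAlgebra.single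
        (QuotientAddGroup.mk (Pi.single i (1 : ℤ)) : (Fin m → ℤ) ⧸ L) (1 : K)) ^ w i := by
      simp [φ, mono, map_prod]
    rw [e, key]
    congr 2
    exact Finset.univ_sum_single _
  have hker : latticeIdeal K L ≤ RingHom.ker φ := by
    refine Ideal.span_le.2 ?_
    rintro f ⟨w, hw, rfl⟩
    rw [SetLike.mem_coe, RingHom.mem_ker, map_sub, hφ, hφ, sub_eq_zero]
    congr 1
    rw [QuotientAddGroup.eq]
    have : (-(fun i => ((intPos w i : ℕ) : ℤ)) + fun i => ((intNeg w i : ℕ) : ℤ)) = -w := by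
      funext i
      simp only [Pi.add_apply, Pi.neg_apply, intPos, intNeg]
      omega
    rw [this]
    exact L.neg_mem hw
  have h0 := hker h
  rw [RingHom.mem_ker, map_sub, hφ, hφ, sub_eq_zero] at h0
  have h1 := (AddMonoidAlgebra.single_left_inj (one_ne_zero (α := K))).1 h0
  rw [QuotientAddGroup.eq] at h1
  have h2 := L.neg_mem h1
  convert h2 using 1
  funext i
  simp
  ring

/-- monomials in the support of members of a binomial ideal are divisible by a generator monomial -/
theorem exists_le_of_mem {m : ℕ} (S : Set (Fin m → ℕ)) (I : Set (MvPolynomial (Fin m) K))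
    (hI : ∀ f ∈ I, ∃ u ∈ S, ∃ v ∈ S, f = mono K u - mono K v)
    {a b : Fin m → ℕ} (hab : a ≠ b) (h : mono K a - mono K b ∈ Ideal.span I) :
    ∃ w ∈ S, w ≤ a := by
  have hle : Ideal.span I ≤ Ideal.span ((fun s => monomial s (1 : K)) ''
      (Finsupp.equivFunOnFinite.symm '' S)) := by
    refine Ideal.span_le.2 fun f hf => ?_
    obtain ⟨u, hu, v, hv, rfl⟩ := hI f hf
    refine Ideal.sub_mem _ ?_ ?_
    · rw [mono_eq]; exact Ideal.subset_span ⟨_, ⟨u, hu, rfl⟩, rfl⟩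
    · rw [mono_eq]; exact Ideal.subset_span ⟨_, ⟨v, hv, rfl⟩, rfl⟩
  have h1 := hle h
  rw [mem_ideal_span_monomial_image] at h1
  obtain ⟨_, ⟨w, hw, rfl⟩, hwa⟩ := h1 (Finsupp.equivFunOnFinite.symm a) (by
    rw [mem_support_iff, coeff_sub, coeff_mono, coeff_mono, if_pos rfl, if_neg hab.symm]
    simp)
  exact ⟨w, hw, fun i => hwa i⟩

/-- evaluate at the indicator vector of the support of `u` -/
theorem eval_mono {m : ℕ} (u a : Fin m → ℕ) :
    eval (fun i => if u i = 0 then (0 : K) else 1) (mono K a) =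
      open Classical in if ∀ i, u i = 0 → a i = 0 then (1 : K) else 0 := by
  classical
  simp only [mono, map_prod, map_pow, eval_X]
  split_ifs with h
  · refine Finset.prod_eq_one fun i _ => ?_
    by_cases hi : u i = 0
    · simp [hi, h i hi]
    · simp [hi]
  · push Not at h
    obtain ⟨i, hi, hai⟩ := h
    exact Finset.prod_eq_zero (Finset.mem_univ i) (by simp [hi, hai])

theorem stmt4 {m : ℕ} (L : AddSubgroup (Fin m → ℤ))
    (hL0 : L ≠ ⊥) (hLpos : ∀ u ∈ L, (∀ i, 0 ≤ u i) → u = 0)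
    -- `I_L` has a binomial generating set consisting of differences of squarefree monomials
    (t : ℕ) (Bgen : Fin t → MvPolynomial (Fin m) K)
    (hsf : ∀ i, ∃ u v : Fin m → ℕ, (∀ k, u k ≤ 1) ∧ (∀ k, v k ≤ 1) ∧
      Bgen i = mono K u - mono K v)
    (hgen : Ideal.span (Set.range Bgen) = latticeIdeal K L)
    -- `I_L` has a unique minimal system of binomial generators
    (huniq : ∃ P : Finset (MvPolynomial (Fin m) K), P.card = sInf (muSet K L) ∧
      (∀ f ∈ P, IsBinomial K f) ∧
      Ideal.span (P : Set (MvPolynomial (Fin m) K)) = latticeIdeal K L ∧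
      ∀ f ∈ P, ∀ B : Set (MvPolynomial (Fin m) K), (∀ g ∈ B, IsBinomial K g) →
        Ideal.span B = latticeIdeal K L → (f ∈ B ∨ -f ∈ B)) :
    sInf (barSet K L) = sInf (muSet K L) := by
  classical
  obtain ⟨P, hPc, hPb, hPs, hPu⟩ := huniq
  have hPs' : ∀ f ∈ P, f ∈ latticeIdeal K L := fun f hf => hPs ▸ Ideal.subset_span hf
  -- minimality
  have hmin : ∀ f ∈ P, f ∉ Ideal.span ((P.erase f : Finset _) : Set (MvPolynomial (Fin m) K)) := by
    intro f hf hmem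
    have : (P.erase f).card ∈ muSet K L := by
      refine ⟨P.erase f, rfl, fun g hg => hPb g (Finset.mem_of_mem_erase hg), ?_⟩
      apply le_antisymm
      · exact Ideal.span_le.2 fun g hg => hPs' g (Finset.mem_of_mem_erase hg)
      · rw [← hPs]
        refine Ideal.span_le.2 fun g hg => ?_
        by_cases hgf : g = f
        · rw [hgf]; exact hmem
        · exact Ideal.subset_span (Finset.mem_erase.2 ⟨hgf, hg⟩)
    have h1 := Nat.sInf_le this
    have h2 := Finset.card_erase_lt_of_mem hf
    omega
  -- squarefree representation
  have hrep : ∀ f : P, ∃ U : Bool → Fin m → ℕ, (∀ b k, U b k ≤ 1) ∧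
      f.1 = mono K (U true) - mono K (U false) := by
    rintro ⟨f, hf⟩
    rcases hPu f hf (Set.range Bgen) (by
        rintro g ⟨i, rfl⟩
        obtain ⟨u, v, -, -, h⟩ := hsf i
        exact ⟨u, v, h⟩) hgen with ⟨i, hi⟩ | ⟨i, hi⟩
    · obtain ⟨u, v, hu, hv, h⟩ := hsf i
      refine ⟨fun b => if b then u else v, ?_, ?_⟩
      · rintro (_ | _) k <;> simp [hu, hv]
      · simp [← hi, h]
    · obtain ⟨u, v, hu, hv, h⟩ := hsf i
      refine ⟨fun b => if b then v else u, ?_, ?_⟩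
      · rintro (_ | _) k <;> simp [hu, hv]
      · have : f = - Bgen i := by rw [hi, neg_neg]
        simp [this, h]
  choose U hU1 hUf using hrep
  have hsign : ∀ (f : P) (b : Bool), mono K (U f b) - mono K (U f !b) = f.1 ∨
      mono K (U f b) - mono K (U f !b) = -f.1 := by
    rintro f (_ | _)
    · right; rw [hUf f]; simp
    · left; rw [hUf f]; simp
  have hUmem : ∀ (f : P) (b : Bool),
      mono K (U f b) - mono K (U f !b) ∈ latticeIdeal K L := by
    intro f b
    rcases hsign f b with h | h <;> rw [h]
    · exact hPs' _ f.2
    · exact neg_mem (hPs' _ f.2)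
  have hne : ∀ (f : P) (b : Bool), U f b ≠ U f !b := by
    intro f b h
    have h0 : f.1 = 0 := by
      rcases hsign f b with h' | h' <;> rw [h, sub_self] at h'
      · exact h'.symm
      · exact neg_eq_zero.1 h'.symm
    exact hmin f.1 f.2 (by rw [h0]; exact zero_mem _)
  have hnle : ∀ (f : P) (b : Bool), ¬ U f (!b) ≤ U f b := by
    intro f b h
    have h1 := mem_L_of_mem K L _ _ (hUmem f b)
    have h2 := hLpos _ h1 (fun i => by have h3 : U f (!b) i ≤ U f b i := h i; exact sub_nonneg.2 (by exact_mod_cast h3))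
    apply hne f b
    funext i
    have := congrFun h2 i
    simp only [Pi.zero_apply] at this
    omega
  -- main minimality lemma
  have hA : ∀ (f g : P) (b c : Bool), U g c ≤ U f b → f = g ∧ b = c := by
    intro f g b c hle
    by_cases hfg : f = g
    · subst hfg
      refine ⟨rfl, ?_⟩
      by_contra hbc
      have : c = !b := by
        revert hbc; clear * -; revert b c; decide
      rw [this] at hle
      exact hnle f b hle
    · exfalso
      set u := U f b with hu
      set v := U f !b with hv
      set w := U g c with hw
      set w' := U g !c with hw'
      obtain ⟨d, hd⟩ : ∃ d, u = d + w := ⟨u - w, (tsub_add_cancel_of_le hle).symm⟩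
      have hgne : g.1 ≠ f.1 := fun h => hfg (Subtype.ext h.symm)
      let n := mono K (d + w') - mono K v
      have hn : n = (mono K u - mono K v) - mono K d * (mono K w - mono K w') := by
        simp only [n]; rw [hd, mono_add', mono_add']; ring
      let B : Set (MvPolynomial (Fin m) K) := insert n ((P.erase f.1 : Finset _) : Set _)
      have hB1 : ∀ g ∈ B, IsBinomial K g := by
        rintro x (rfl | hx)
        · exact ⟨_, _, rfl⟩
        · exact hPb x (Finset.mem_of_mem_erase hx)
      have hnmem : n ∈ latticeIdeal K L := by
        rw [hn]
        exact sub_mem (hUmem f b) (Ideal.mul_mem_left _ _ (hUmem g c))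
      have hB2 : Ideal.span B = latticeIdeal K L := by
        apply le_antisymm
        · refine Ideal.span_le.2 ?_
          rintro x (rfl | hx)
          · exact hnmem
          · exact hPs' x (Finset.mem_of_mem_erase hx)
        · rw [← hPs]
          refine Ideal.span_le.2 fun x hx => ?_
          by_cases hxf : x = f.1
          · have hgB : g.1 ∈ Ideal.span B :=
              Ideal.subset_span (Or.inr (Finset.mem_erase.2 ⟨hgne, g.2⟩))
            have hgB' : mono K w - mono K w' ∈ Ideal.span B := by
              rcases hsign g c with h | h
              · rw [h]; exact hgB
              · rw [h]; exact neg_mem hgB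
            have hfB : mono K u - mono K v ∈ Ideal.span B := by
              have : mono K u - mono K v = n + mono K d * (mono K w - mono K w') := by
                rw [hn]; ring
              rw [this]
              exact add_mem (Ideal.subset_span (Or.inl rfl)) (Ideal.mul_mem_left _ _ hgB')
            rw [hxf]
            rcases hsign f b with h | h
            · rw [← hu, ← hv] at h; rw [h] at hfB; exact hfB
            · rw [← hu, ← hv] at h; rw [h] at hfB; exact neg_mem_iff.1 hfB
          · exact Ideal.subset_span (Or.inr (Finset.mem_erase.2 ⟨hxf, hx⟩))
      have hnf : n = f.1 ∨ n = -f.1 := by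
        rcases hPu f.1 f.2 B hB1 hB2 with (h | h) | (h | h)
        · exact Or.inl h.symm
        · exact absurd h (by simp)
        · exact Or.inr h.symm
        · exact absurd (neg_mem_iff.1 (Ideal.subset_span h)) (hmin f.1 f.2)
      have hcu : d + w' = u := by
        refine binom_cancel K (hne f b) ?_
        change n = _ ∨ n = _
        rw [← hv]
        rw [← neg_sub (mono K u) (mono K v)]
        rcases hsign f b with h | h <;> rw [← hu, ← hv] at h <;> rw [h]
        · exact hnf
        · rw [neg_neg]; exact hnf.symm
      rw [hd] at hcu
      exact hne g c (add_left_cancel hcu).symm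
  -- lower bound
  have hlow : ∀ s ∈ barSet K L, P.card ≤ s := by
    rintro s ⟨B, hB, hrad⟩
    have hBb := fun j => (hB j).1
    choose A C hAC using hBb
    let D : Fin s → Bool → Fin m → ℕ := fun j b => if b then A j else C j
    have hex : ∀ p : P × Bool, ∃ q : Fin s × Bool, ∀ i, D q.1 q.2 i = 0 ↔ U p.1 p.2 i = 0 := by
      rintro ⟨f, b⟩
      let ev := eval (fun i => if U f b i = 0 then (0 : K) else 1)
      -- some B j does not vanish
      have hj : ∃ j, ev (B j) ≠ 0 := by
        by_contra hcon
        push Not at hcon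
        have h1 : mono K (U f b) - mono K (U f !b) ∈ (Ideal.span (Set.range B)).radical := by
          rw [← hrad]; exact Ideal.le_radical (hUmem f b)
        obtain ⟨k, hk⟩ := h1
        have h2 : Ideal.span (Set.range B) ≤ RingHom.ker ev := by
          refine Ideal.span_le.2 ?_
          rintro _ ⟨j, rfl⟩
          exact hcon j
        have h3 := h2 hk
        rw [RingHom.mem_ker, map_pow] at h3
        have h4 := eq_zero_of_pow_eq_zero h3
        rw [map_sub] at h4
        simp only [ev] at h4
        rw [eval_mono, eval_mono, if_pos (fun i h => h), if_neg, sub_zero] at h4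
        · exact one_ne_zero h4
        · intro h
          apply hnle f b
          intro i
          change U f (!b) i ≤ U f b i
          by_cases hi : U f b i = 0
          · rw [h i hi]; exact Nat.zero_le _
          · have := hU1 f (!b) i
            omega
      obtain ⟨j, hj⟩ := hj
      have hmemj : ∀ x : Bool, mono K (D j x) - mono K (D j !x) ∈
          Ideal.span (P : Set (MvPolynomial (Fin m) K)) := by
        have h0 : B j ∈ Ideal.span (P : Set (MvPolynomial (Fin m) K)) := hPs ▸ (hB j).2
        rintro (_ | _)
        · have : mono K (D j false) - mono K (D j !false) = - B j := by
            rw [hAC j]; simp [D]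
          rw [this]; exact neg_mem h0
        · have : mono K (D j true) - mono K (D j !true) = B j := by
            rw [hAC j]; simp [D]
          rw [this]; exact h0
      have hDne : ∀ x : Bool, D j x ≠ D j !x := by
        have hACne : A j ≠ C j := by
          intro h
          apply hj
          rw [hAC j, h, sub_self, map_zero]
        rintro (_ | _)
        · simpa [D] using hACne.symm
        · simpa [D] using hACne
      have hx : ∃ x : Bool, ∀ i, U f b i = 0 → D j x i = 0 := by
        by_contra hcon
        push Not at hcon
        apply hj
        rw [hAC j, map_sub]
        simp only [ev]
        rw [eval_mono, eval_mono, if_neg, if_neg, sub_zero]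
        · intro h
          obtain ⟨i, hi, hi'⟩ := hcon false
          exact hi' (by simpa [D] using h i hi)
        · intro h
          obtain ⟨i, hi, hi'⟩ := hcon true
          exact hi' (by simpa [D] using h i hi)
      obtain ⟨x, hx⟩ := hx
      obtain ⟨w, ⟨⟨g, c⟩, rfl⟩, hwle⟩ := exists_le_of_mem K
        (Set.range fun p : P × Bool => U p.1 p.2) (P : Set (MvPolynomial (Fin m) K))
        (fun g hg => ⟨_, ⟨(⟨g, hg⟩, true), rfl⟩, _, ⟨(⟨g, hg⟩, false), rfl⟩, hUf ⟨g, hg⟩⟩)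
        (hDne x) (hmemj x)
      simp only at hwle
      have hwu : U g c ≤ U f b := by
        intro i
        change U g c i ≤ U f b i
        by_cases hi : U f b i = 0
        · have : U g c i ≤ D j x i := hwle i
          rw [hx i hi] at this
          omega
        · have := hU1 g c i
          omega
      obtain ⟨rfl, rfl⟩ := hA f g b c hwu
      refine ⟨(j, x), fun i => ⟨fun h => ?_, hx i⟩⟩
      have : U f b i ≤ D j x i := hwle i
      change D j x i = 0 at h
      change U f b i = 0
      omega
    choose q hq using hex
    have hinj : Function.Injective q := by
      rintro ⟨f, b⟩ ⟨g, c⟩ h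
      have hle : U g c ≤ U f b := by
        intro i
        change U g c i ≤ U f b i
        have h1 := hq (f, b) i
        have h2 := hq (g, c) i
        rw [← h] at h2
        have h3 := h1.symm.trans h2
        simp only at h3
        have := hU1 g c i
        by_cases hi : U f b i = 0
        · rw [h3.1 hi]; exact Nat.zero_le _
        · omega
      obtain ⟨rfl, rfl⟩ := hA f g b c hle
      rfl
    have hcard := Fintype.card_le_of_injective q hinj
    simp at hcard
    exact hcard
  have hmem : P.card ∈ barSet K L := by
    refine ⟨fun j => (P.equivFin.symm j).1, fun j => ⟨hPb _ (P.equivFin.symm j).2,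
      hPs' _ (P.equivFin.symm j).2⟩, ?_⟩
    have : Set.range (fun j => (P.equivFin.symm j).1) = (P : Set (MvPolynomial (Fin m) K)) := by
      ext x
      constructor
      · rintro ⟨j, rfl⟩; exact (P.equivFin.symm j).2
      · intro hx; exact ⟨P.equivFin ⟨x, hx⟩, by simp⟩
    rw [this, hPs]
  rw [← hPc]
  exact le_antisymm (Nat.sInf_le hmem) (hlow _ (Nat.sInf_mem ⟨_, hmem⟩))
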